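/- arXiv:2008.13163 — 2 statements merged into one kernel-verified Lean document; each statement's English description precedes it below -/
import Mathlib

section
/- The sequence of integrals a_r := ∫₀¹ L({1}_r;x)/x² dx satisfies the generating-function identity 1 - ∑_{r≥1} 2^r a_r u^r = Γ(1-u)Γ(1/2)/Γ(1/2-u) for |u| < 1/2, where L({1}_r;x) = (1/2^r)·(-log(1-x²))^r/r!. -/
/-!
Summing the exponential series of `-u * log (1 - x ^ 2)` under the integral sign turns
`∑ 2 ^ r * a_r * u ^ r` into `∫ x in 0..1, ((1 - x ^ 2) ^ (-u) - 1) / x ^ 2`; the exchange is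
dominated by the same integral at `|u|`. Integration by parts against `1 / x` removes the
denominator and leaves a multiple of `∫ x in 0..1, (1 - x ^ 2) ^ (-u)`, a Beta integral in the
variable `x ^ 2`. All these integrals converge for `|u| < 1`.
-/

open Set MeasureTheory Filter Topology

theorem integral_comp_rpow_zero_one {E : Type*} [NormedAddCommGroup E] [NormedSpace ℝ E]
    {p : ℝ} (hp : 0 < p) (g : ℝ → E) :
    ∫ x in (0 : ℝ)..1, (p * x ^ (p - 1)) • g (x ^ p) = ∫ t in (0 : ℝ)..1, g t := by
  have integral_eq_Ioi (f : ℝ → E) :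
      ∫ x in (0 : ℝ)..1, f x = ∫ x in Ioi 0, (Iic 1).indicator f x := by
    rw [intervalIntegral.integral_of_le zero_le_one, setIntegral_indicator measurableSet_Iic,
      Ioi_inter_Iic]
  rw [integral_eq_Ioi g, ← integral_comp_rpow_Ioi_of_pos hp, integral_eq_Ioi]
  refine setIntegral_congr_fun measurableSet_Ioi fun x (hx : 0 < x) => ?_
  have rpow_le_one_iff : x ^ p ≤ 1 ↔ x ≤ 1 := by
    simpa only [Real.one_rpow] using Real.rpow_le_rpow_iff hx.le zero_le_one hp
  by_cases h : x ≤ 1 <;> simp [indicator, rpow_le_one_iff, h]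

theorem integral_rpow_mul_one_sub_rpow {a b : ℝ} (ha : 0 < a) (hb : 0 < b) :
    ∫ t in (0 : ℝ)..1, t ^ (a - 1) * (1 - t) ^ (b - 1) = ProbabilityTheory.beta a b := by
  have ofReal_integral :
      ((∫ t in (0 : ℝ)..1, t ^ (a - 1) * (1 - t) ^ (b - 1) : ℝ) : ℂ)
        = Complex.betaIntegral a b := by
    rw [← intervalIntegral.integral_ofReal]
    refine intervalIntegral.integral_congr fun t ht => ?_
    rw [uIcc_of_le zero_le_one] at ht
    push_cast [Complex.ofReal_cpow ht.1, Complex.ofReal_cpow (sub_nonneg.2 ht.2)]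
    rfl
  rw [ProbabilityTheory.beta_eq_betaIntegralReal a b ha hb, ← ofReal_integral, Complex.ofReal_re]

theorem integral_one_sub_rpow_rpow {p s : ℝ} (hp : 0 < p) (hs : -1 < s) :
    ∫ x in (0 : ℝ)..1, (1 - x ^ p) ^ s = ProbabilityTheory.beta (1 / p) (s + 1) / p := by
  rw [eq_div_iff hp.ne', ← intervalIntegral.integral_mul_const,
    ← integral_rpow_mul_one_sub_rpow (one_div_pos.2 hp) (neg_lt_iff_pos_add.1 hs),
    ← integral_comp_rpow_zero_one hp fun t => t ^ (1 / p - 1) * (1 - t) ^ (s + 1 - 1)]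
  refine intervalIntegral.integral_congr_Ioo_of_le zero_le_one fun x hx => ?_
  have rpow_cancel : x ^ (p - 1) * (x ^ p) ^ (1 / p - 1) = 1 := by
    rw [← Real.rpow_mul hx.1.le, ← Real.rpow_add hx.1, mul_sub, mul_one_div_cancel hp.ne']
    simp
  rw [smul_eq_mul, add_sub_cancel_right]
  linear_combination (-p * (1 - x ^ p) ^ s) * rpow_cancel

theorem one_sub_sq_mem_Ioo {x : ℝ} (hx : x ∈ Ioo (0 : ℝ) 1) : 1 - x ^ 2 ∈ Ioo (0 : ℝ) 1 :=
  ⟨sub_pos.2 (pow_lt_one₀ hx.1.le hx.2 two_ne_zero), sub_lt_self 1 (pow_pos hx.1 2)⟩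

section OneSubSqRpow

variable {s : ℝ}

theorem intervalIntegrable_one_sub_sq_rpow (hs : -1 < s) :
    IntervalIntegrable (fun x : ℝ => (1 - x ^ 2) ^ s) volume 0 1 := by
  have one_sub : IntervalIntegrable (fun x : ℝ => (1 - x) ^ s) volume 0 1 := by
    simpa using
      ((intervalIntegral.intervalIntegrable_rpow' (a := 0) (b := 1) hs).comp_sub_left 1).symm
  have one_add : ContinuousOn (fun x : ℝ => (1 + x) ^ s) (uIcc 0 1) := by
    rw [uIcc_of_le zero_le_one]
    exact ContinuousOn.rpow_const (by fun_prop) fun x hx => Or.inl (by linarith [hx.1])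
  refine (one_sub.mul_continuousOn one_add).congr_uIoo fun x hx => ?_
  rw [uIoo_of_le zero_le_one] at hx
  have factor : 1 - x ^ 2 = (1 - x) * (1 + x) := by ring
  simp only [factor]
  rw [Real.mul_rpow (sub_nonneg.2 hx.2.le) (by linarith [hx.1])]

theorem abs_rpow_sub_one_le {w : ℝ} (hs : -1 ≤ s) (hw : w ∈ Ioc (0 : ℝ) 1) :
    |w ^ s - 1| ≤ (1 - w) * (w ^ s + (s + 2)) := by
  have upper : w ^ s * w ≤ 1 := by
    rw [← Real.rpow_add_one hw.1.ne']
    exact Real.rpow_le_one hw.1.le hw.2 (neg_le_iff_add_nonneg.1 hs)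
  -- Bernoulli's inequality needs an exponent at least `1`, which `s + 2` is.
  have lower : 1 + (s + 2) * (w - 1) ≤ w ^ s :=
    calc 1 + (s + 2) * (w - 1) ≤ (1 + (w - 1)) ^ (s + 2) :=
          one_add_mul_self_le_rpow_one_add (by linarith [hw.1]) (by linarith)
      _ = w ^ (s + 2) := by rw [add_sub_cancel]
      _ ≤ w ^ s := Real.rpow_le_rpow_of_exponent_ge hw.1 hw.2 (by linarith)
  have : 0 ≤ (1 - w) * w ^ s := mul_nonneg (sub_nonneg.2 hw.2) (Real.rpow_nonneg hw.1.le s)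
  have : 0 ≤ (1 - w) * (s + 2) := mul_nonneg (sub_nonneg.2 hw.2) (by linarith)
  exact abs_le.2 ⟨by linarith, by linarith⟩

theorem intervalIntegrable_one_sub_sq_rpow_sub_one_div_sq (hs : -1 < s) :
    IntervalIntegrable (fun x : ℝ => ((1 - x ^ 2) ^ s - 1) / x ^ 2) volume 0 1 := by
  have bound : IntegrableOn (fun x : ℝ => (1 - x ^ 2) ^ s + (s + 2)) (Ioo 0 1) :=
    (intervalIntegrable_iff_integrableOn_Ioo_of_le zero_le_one).1
      ((intervalIntegrable_one_sub_sq_rpow hs).add intervalIntegrable_const)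
  refine (intervalIntegrable_iff_integrableOn_Ioo_of_le zero_le_one).2 (bound.mono' ?_ ?_)
  · exact Measurable.aestronglyMeasurable (by fun_prop)
  · refine ae_restrict_of_forall_mem measurableSet_Ioo fun x hx => ?_
    rw [Real.norm_eq_abs, abs_div, abs_of_pos (pow_pos hx.1 2), div_le_iff₀' (pow_pos hx.1 2)]
    simpa only [sub_sub_cancel] using
      abs_rpow_sub_one_le hs.le (Ioo_subset_Ioc_self (one_sub_sq_mem_Ioo hx))

theorem hasDerivAt_one_sub_one_sub_sq_rpow_div {x : ℝ} (hx : x ≠ 0) (hx' : 1 - x ^ 2 ≠ 0) :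
    HasDerivAt (fun y : ℝ => (1 - (1 - y ^ 2) ^ (s + 1)) / y)
      (((1 - x ^ 2) ^ s - 1) / x ^ 2 + (1 + 2 * s) * (1 - x ^ 2) ^ s) x := by
  refine (((((hasDerivAt_pow 2 x).const_sub 1).rpow_const (p := s + 1)
    (Or.inl hx')).const_sub 1).fun_div (hasDerivAt_id x) hx).congr_deriv ?_
  rw [add_sub_cancel_right, Real.rpow_add_one hx']
  simp only [id_eq]
  field_simp
  push_cast
  ring

theorem tendsto_one_sub_one_sub_sq_rpow_div_zero :
    Tendsto (fun x : ℝ => (1 - (1 - x ^ 2) ^ (s + 1)) / x) (𝓝[>] 0) (𝓝 0) := by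
  have hasDerivAt_zero : HasDerivAt (fun x : ℝ => 1 - (1 - x ^ 2) ^ (s + 1)) 0 0 := by
    simpa using (((hasDerivAt_pow 2 (0 : ℝ)).const_sub 1).rpow_const (p := s + 1)
      (Or.inl (by norm_num))).const_sub 1
  simpa [slope_fun_def_field] using
    (hasDerivAt_iff_tendsto_slope.1 hasDerivAt_zero).mono_left (nhdsGT_le_nhdsNE 0)

theorem tendsto_one_sub_one_sub_sq_rpow_div_one (hs : -1 < s) :
    Tendsto (fun x : ℝ => (1 - (1 - x ^ 2) ^ (s + 1)) / x) (𝓝[<] 1) (𝓝 1) := by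
  have hs' : 0 < s + 1 := neg_lt_iff_pos_add.1 hs
  have continuousAt_one : ContinuousAt (fun x : ℝ => (1 - (1 - x ^ 2) ^ (s + 1)) / x) 1 :=
    (continuousAt_const.sub (ContinuousAt.rpow_const (by fun_prop) (Or.inr hs'.le))).div
      continuousAt_id one_ne_zero
  simpa [Real.zero_rpow hs'.ne'] using continuousAt_one.tendsto.mono_left nhdsWithin_le_nhds

theorem integral_one_sub_sq_rpow_sub_one_div_sq (hs : -1 < s) :
    ∫ x in (0 : ℝ)..1, ((1 - x ^ 2) ^ s - 1) / x ^ 2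
      = 1 - (1 + 2 * s) * ∫ x in (0 : ℝ)..1, (1 - x ^ 2) ^ s := by
  have integrable_left := intervalIntegrable_one_sub_sq_rpow_sub_one_div_sq hs
  have integrable_right := (intervalIntegrable_one_sub_sq_rpow hs).const_mul (1 + 2 * s)
  have h := intervalIntegral.integral_eq_sub_of_hasDerivAt_of_tendsto zero_lt_one
    (fun x hx => hasDerivAt_one_sub_one_sub_sq_rpow_div hx.1.ne' (one_sub_sq_mem_Ioo hx).1.ne')
    (integrable_left.add integrable_right)
    tendsto_one_sub_one_sub_sq_rpow_div_zero (tendsto_one_sub_one_sub_sq_rpow_div_one hs)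
  rw [intervalIntegral.integral_add integrable_left integrable_right,
    intervalIntegral.integral_const_mul, sub_zero] at h
  exact eq_sub_of_add_eq h

theorem integral_one_sub_sq_rpow_sub_one_div_sq_eq_Gamma (hs : -1 < s) (hs' : s ≠ -1 / 2) :
    ∫ x in (0 : ℝ)..1, ((1 - x ^ 2) ^ s - 1) / x ^ 2
      = 1 - Real.Gamma (1 + s) * Real.Gamma (1 / 2) / Real.Gamma (1 / 2 + s) := by
  have hne : 1 / 2 + s ≠ 0 := fun h => hs' (by linarith)
  have Gamma_succ : Real.Gamma (1 / 2 + (1 + s)) = (1 / 2 + s) * Real.Gamma (1 / 2 + s) := by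
    rw [add_left_comm, add_comm, Real.Gamma_add_one hne]
  have beta_integral : ∫ x in (0 : ℝ)..1, (1 - x ^ 2) ^ s
      = Real.Gamma (1 / 2) * Real.Gamma (1 + s) / ((1 / 2 + s) * Real.Gamma (1 / 2 + s)) / 2 := by
    simpa only [Real.rpow_two, ProbabilityTheory.beta, Gamma_succ, add_comm s 1]
      using integral_one_sub_rpow_rpow two_pos hs
  rw [integral_one_sub_sq_rpow_sub_one_div_sq hs, beta_integral,
    show 1 + 2 * s = 2 * (1 / 2 + s) by ring]
  generalize 1 / 2 + s = v at hne ⊢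
  field_simp

end OneSubSqRpow

/-- The one-variable multiple polylogarithm `L({1}_r; x) = 2⁻ʳ Li_{1,…,1}(x²)` with `r` indices
equal to `1`, defined through the closed form `Li_{1,…,1}(z) = (-log (1 - z))ʳ / r!`; the integrals
`a_r` of the theorem are those of `onesPolylog r x / x ^ 2` over `(0, 1)`. -/
noncomputable def onesPolylog (r : ℕ) (x : ℝ) : ℝ :=
  (-Real.log (1 - x ^ 2)) ^ r / (2 ^ r * (r.factorial : ℝ))

theorem onesPolylog_nonneg (r : ℕ) {x : ℝ} (hx : x ∈ Ioo (0 : ℝ) 1) : 0 ≤ onesPolylog r x := by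
  have := one_sub_sq_mem_Ioo hx
  have := neg_nonneg.2 (Real.log_nonpos this.1.le this.2.le)
  unfold onesPolylog
  positivity

theorem hasSum_onesPolylog (u : ℝ) {x : ℝ} (hx : 0 < 1 - x ^ 2) :
    HasSum (fun r : ℕ => 2 ^ r * onesPolylog r x * u ^ r) ((1 - x ^ 2) ^ (-u)) := by
  have h := NormedSpace.expSeries_div_hasSum_exp (-Real.log (1 - x ^ 2) * u)
  rw [← Real.exp_eq_exp_ℝ, neg_mul_comm, ← Real.rpow_def_of_pos hx] at h
  refine h.congr_fun fun r => ?_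
  rw [onesPolylog, ← neg_mul_comm, mul_pow]
  field_simp

theorem hasSum_onesPolylog_succ_div_sq (u : ℝ) {x : ℝ} (hx : 0 < 1 - x ^ 2) :
    HasSum (fun r : ℕ => 2 ^ (r + 1) * (onesPolylog (r + 1) x / x ^ 2) * u ^ (r + 1))
      (((1 - x ^ 2) ^ (-u) - 1) / x ^ 2) := by
  have h := ((hasSum_nat_add_iff' 1).2 (hasSum_onesPolylog u hx)).div_const (x ^ 2)
  simp only [Finset.sum_range_one, pow_zero, one_mul, mul_one] at h
  have zeroth : onesPolylog 0 x = 1 := by simp [onesPolylog]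
  rw [zeroth] at h
  exact h.congr_fun fun r => by ring

theorem hasSum_integral_onesPolylog_div_sq {u : ℝ} (hu : |u| < 1) :
    HasSum (fun r : ℕ =>
        2 ^ (r + 1) * (∫ x in (0 : ℝ)..1, onesPolylog (r + 1) x / x ^ 2) * u ^ (r + 1))
      (∫ x in (0 : ℝ)..1, ((1 - x ^ 2) ^ (-u) - 1) / x ^ 2) := by
  have hasSum_on_Ioo (v : ℝ) {x : ℝ} (hx : x ∈ Ioo (0 : ℝ) 1) :=
    hasSum_onesPolylog_succ_div_sq v (one_sub_sq_mem_Ioo hx).1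
  have integrable_tsum : IntegrableOn (fun x : ℝ =>
      ∑' r : ℕ, 2 ^ (r + 1) * (onesPolylog (r + 1) x / x ^ 2) * |u| ^ (r + 1)) (Ioo 0 1) :=
    ((intervalIntegrable_iff_integrableOn_Ioo_of_le zero_le_one).1
      (intervalIntegrable_one_sub_sq_rpow_sub_one_div_sq (neg_lt_neg hu))).congr_fun
      (fun x hx => (hasSum_on_Ioo |u| hx).tsum_eq.symm) measurableSet_Ioo
  simp only [← intervalIntegral.integral_const_mul, ← intervalIntegral.integral_mul_const]
  simp only [intervalIntegral.integral_of_le zero_le_one, integral_Ioc_eq_integral_Ioo]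
  refine hasSum_integral_of_dominated_convergence _ (fun r => ?_) (fun r => ?_) ?_
    integrable_tsum ?_
  · exact Measurable.aestronglyMeasurable (by unfold onesPolylog; fun_prop)
  · refine ae_restrict_of_forall_mem measurableSet_Ioo fun x hx => ?_
    rw [norm_mul, norm_pow, Real.norm_eq_abs u, Real.norm_of_nonneg]
    have := onesPolylog_nonneg (r + 1) hx
    positivity
  · exact ae_restrict_of_forall_mem measurableSet_Ioo fun x hx => (hasSum_on_Ioo |u| hx).summable
  · exact ae_restrict_of_forall_mem measurableSet_Ioo fun x hx => hasSum_on_Ioo u hx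

theorem stmt6_general {u : ℝ} (hu : |u| < 1) (hu' : u ≠ 1 / 2) :
    HasSum (fun r : ℕ =>
        2 ^ (r + 1) * (∫ x in (0 : ℝ)..1, onesPolylog (r + 1) x / x ^ 2) * u ^ (r + 1))
      (1 - Real.Gamma (1 - u) * Real.Gamma (1 / 2) / Real.Gamma (1 / 2 - u)) := by
  have exponent_gt : -1 < -u := neg_lt_neg (abs_lt.1 hu).2
  have exponent_ne : -u ≠ -1 / 2 := by rwa [neg_div, Ne, neg_inj]
  simpa only [integral_one_sub_sq_rpow_sub_one_div_sq_eq_Gamma exponent_gt exponent_ne,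
    ← sub_eq_add_neg] using hasSum_integral_onesPolylog_div_sq hu

theorem stmt6 (u : ℝ) (hu : |u| < 1 / 2) :
    1 - ∑' r : ℕ,
        (2 : ℝ) ^ (r + 1)
          * (∫ x in (0:ℝ)..1,
              ((-Real.log (1 - x ^ 2)) ^ (r + 1) / ((2:ℝ) ^ (r + 1) * ((r + 1).factorial : ℝ))) / x ^ 2)
          * u ^ (r + 1)
      = Real.Gamma (1 - u) * Real.Gamma (1 / 2) / Real.Gamma (1 / 2 - u) :=
  (congrArg (1 - ·) (stmt6_general (hu.trans one_half_lt_one) (abs_lt.1 hu).2.ne).tsum_eq).trans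
    (sub_sub_cancel 1 _)
end

section
/- ∫₀¹ t(1,1;x) dx = log 2 - ζ(2)/4, where t(1,1;x) = ∑_{0<m<n} x^{2n-1}/((2m-1)(2n-1)) and the integral is the termwise sum ∑_{0<m<n} 1/((2m-1)(2n-1)(2n)). -/
/-!
With `Oₙ = ∑_{k < n} 1 / (2k + 1)`, put `T = ∑ₙ Oₙ₊₁ / ((2n + 1) (2n + 2))`,
`X = ∑ₙ Oₙ₊₁ / ((2n + 2) (2n + 3))` and `S = ∑ₙ Oₙ₊₁ / ((2n + 3) (2n + 4))`; the last is the double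
series of the theorem, summed along `i + j = n`. Summation by parts gives
`T + X = ∑ₙ 1 / (2n + 1)² = π² / 8` and `X + S = ∑ₙ 1 / ((2n + 1) (2n + 2)) = log 2`. Moreover the
symmetric double series `∑ 1 / ((2i + 1) (2j + 1) (2i + 2j + 1))` equals `2 T` when summed along
`i + j = n`, and `π² / 8 + X` when summed by rows, which telescope. Hence `X = π² / 24` and
`S = log 2 - π² / 24`.
-/

open Finset Filter Topology

section NonnegativeDoubleSeries

lemma hasSum_sigma_of_nonneg {α : Type*} {β : α → Type*} {f : (Σ x, β x) → ℝ} {g : α → ℝ} {a : ℝ}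
    (hf : ∀ p, 0 ≤ f p) (hfg : ∀ x, HasSum (fun y => f ⟨x, y⟩) (g x)) (hg : HasSum g a) :
    HasSum f a := by
  have hsummable : Summable f := (summable_sigma_of_nonneg hf).mpr
    ⟨fun x => (hfg x).summable, hg.summable.congr fun x => (hfg x).tsum_eq.symm⟩
  exact hg.sigma_of_hasSum hfg hsummable

lemma hasSum_prod_of_nonneg {α β : Type*} {f : α × β → ℝ} {g : α → ℝ} {a : ℝ}
    (hf : ∀ p, 0 ≤ f p) (hfg : ∀ x, HasSum (fun y => f (x, y)) (g x)) (hg : HasSum g a) :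
    HasSum f a :=
  (Equiv.sigmaEquivProd α β).hasSum_iff.mp (hasSum_sigma_of_nonneg (fun _ => hf _) hfg hg)

lemma hasSum_sum_antidiagonal_iff_of_nonneg {A : Type*} [AddMonoid A] [HasAntidiagonal A]
    {f : A × A → ℝ} {a : ℝ} (hf : ∀ p, 0 ≤ f p) :
    HasSum (fun n => ∑ p ∈ antidiagonal n, f p) a ↔ HasSum f a := by
  have hdiag (n : A) : HasSum (fun p : antidiagonal n => f p) (∑ p ∈ antidiagonal n, f p) :=
    (antidiagonal n).hasSum f
  rw [← HasAntidiagonal.sigmaAntidiagonalEquivProd.hasSum_iff]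
  exact ⟨hasSum_sigma_of_nonneg (fun _ => hf _) hdiag, fun h => h.sigma hdiag⟩

end NonnegativeDoubleSeries

section SummationByParts

variable {u : ℕ → ℝ}

lemma hasSum_sub_add_of_antitone (hu : Antitone u) (hu0 : Tendsto u atTop (𝓝 0)) (k : ℕ) :
    HasSum (fun n => u n - u (n + k)) (∑ i ∈ range k, u i) := by
  have hpartial (N : ℕ) : ∑ n ∈ range N, (u n - u (n + k)) =
      ∑ i ∈ range k, u i - ∑ i ∈ range k, u (i + N) := by
    have hk := sum_range_add u k N
    have hN := sum_range_add u N k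
    rw [add_comm N k] at hN
    simp only [add_comm _ k, add_comm _ N, sum_sub_distrib]
    linarith
  rw [hasSum_iff_tendsto_nat_of_nonneg fun n => sub_nonneg.mpr (hu (Nat.le_add_right n k))]
  simp_rw [hpartial]
  have htail : Tendsto (fun N => ∑ i ∈ range k, u (i + N)) atTop (𝓝 0) := by
    simpa using tendsto_finsetSum (range k) fun i _ =>
      hu0.comp (tendsto_atTop_mono (fun N => Nat.le_add_left N i) tendsto_id)
  simpa using htail.const_sub (∑ i ∈ range k, u i)

lemma hasSum_sum_range_mul_sub_of_antitone {w : ℕ → ℝ} {a : ℝ} (hw : ∀ n, 0 ≤ w n)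
    (hu : Antitone u) (hu0 : Tendsto u atTop (𝓝 0)) (h : HasSum (fun n => w n * u n) a) :
    HasSum (fun n => (∑ k ∈ range (n + 1), w k) * (u n - u (n + 1))) a := by
  have hrow (m : ℕ) : HasSum (fun j => w m * (u (m + j) - u (m + j + 1))) (w m * u m) := by
    have htelescope := hasSum_sub_add_of_antitone (u := fun j => u (m + j))
      (fun i j hij => hu (Nat.add_le_add_left hij m))
      (hu0.comp (tendsto_atTop_mono (fun j => Nat.le_add_left j m) tendsto_id)) 1
    simpa [add_assoc] using htelescope.mul_left (w m)
  have hnonneg (p : ℕ × ℕ) : 0 ≤ w p.1 * (u (p.1 + p.2) - u (p.1 + p.2 + 1)) :=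
    mul_nonneg (hw _) (sub_nonneg.mpr (hu (Nat.le_succ _)))
  refine ((hasSum_sum_antidiagonal_iff_of_nonneg hnonneg).mpr
    (hasSum_prod_of_nonneg hnonneg hrow h)).congr_fun fun n => ?_
  rw [← Nat.sum_antidiagonal_eq_sum_range_succ_mk (fun p : ℕ × ℕ => w p.1) n, sum_mul]
  exact sum_congr rfl fun p hp => by rw [mem_antidiagonal.mp hp]

end SummationByParts

lemma sum_antidiagonal_one_div_mul {K : Type*} [Field K] [LinearOrder K] [IsStrictOrderedRing K]
    {a c : K} (ha : 0 ≤ a) (hc : 0 < c) (n : ℕ) :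
    ∑ p ∈ antidiagonal n, 1 / ((a * p.1 + c) * (a * p.2 + c)) =
      2 / (a * n + 2 * c) * ∑ k ∈ range (n + 1), 1 / (a * k + c) := by
  have hpartialFraction : ∀ p ∈ antidiagonal n, 1 / ((a * p.1 + c) * (a * p.2 + c)) =
      1 / (a * n + 2 * c) * (1 / (a * p.1 + c) + 1 / (a * p.2 + c)) := by
    intro p hp
    rw [← mem_antidiagonal.mp hp]
    push_cast
    field_simp
    ring
  have hfst := Nat.sum_antidiagonal_eq_sum_range_succ_mk (fun p => 1 / (a * (p.1 : K) + c)) n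
  have hsnd :=
    (Nat.sum_antidiagonal_swap (n := n) (f := fun p => 1 / (a * (p.1 : K) + c))).trans hfst
  rw [sum_congr rfl hpartialFraction, ← mul_sum, sum_add_distrib, hfst]
  simp only [Prod.fst_swap] at hsnd
  rw [hsnd]
  ring

lemma antitone_one_div_mul_add {a c : ℝ} (ha : 0 ≤ a) (hc : 0 < c) :
    Antitone fun n : ℕ => 1 / (a * (n : ℝ) + c) := fun m n hmn => by
  dsimp only
  gcongr

lemma tendsto_one_div_mul_add {a : ℝ} (ha : 0 < a) (c : ℝ) :
    Tendsto (fun n : ℕ => 1 / (a * (n : ℝ) + c)) atTop (𝓝 0) :=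
  tendsto_const_nhds.div_atTop <|
    tendsto_atTop_add_const_right _ c (tendsto_natCast_atTop_atTop.const_mul_atTop ha)

lemma hasSum_one_div_odd_sq :
    HasSum (fun n : ℕ => 1 / (2 * (n : ℝ) + 1) ^ 2) (Real.pi ^ 2 / 8) := by
  have heven : HasSum (fun n : ℕ => 1 / ((2 * n : ℕ) : ℝ) ^ 2) (1 / 4 * (Real.pi ^ 2 / 6)) := by
    refine (hasSum_zeta_two.mul_left (1 / 4)).congr_fun fun n => ?_
    push_cast
    ring
  have hodd : Summable fun n : ℕ => 1 / ((2 * n + 1 : ℕ) : ℝ) ^ 2 :=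
    hasSum_zeta_two.summable.comp_injective (i := fun n => 2 * n + 1) fun m n h => by simpa using h
  have hsplit := (HasSum.even_add_odd (f := fun n : ℕ => 1 / (n : ℝ) ^ 2) heven
    hodd.hasSum).unique hasSum_zeta_two
  have hvalue : ∑' n : ℕ, 1 / ((2 * n + 1 : ℕ) : ℝ) ^ 2 = Real.pi ^ 2 / 8 := by linarith
  simpa using hodd.hasSum_iff.mpr hvalue

lemma sum_range_one_div_odd_mul_even (N : ℕ) :
    ∑ n ∈ range N, 1 / ((2 * (n : ℝ) + 1) * (2 * n + 2)) =
      (harmonic (2 * N) : ℝ) - harmonic N := by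
  induction N with
  | zero => simp
  | succ N ih =>
    rw [sum_range_succ, ih, show 2 * (N + 1) = 2 * N + 1 + 1 by ring]
    simp only [harmonic_succ]
    push_cast
    field_simp
    ring

lemma hasSum_one_div_odd_mul_even :
    HasSum (fun n : ℕ => 1 / ((2 * (n : ℝ) + 1) * (2 * n + 2))) (Real.log 2) := by
  rw [hasSum_iff_tendsto_nat_of_nonneg fun n => by positivity]
  simp_rw [sum_range_one_div_odd_mul_even]
  have hdouble : Tendsto (fun N : ℕ => 2 * N) atTop atTop := tendsto_id.const_mul_atTop' two_pos
  have hlim := ((Real.tendsto_harmonic_sub_log.comp hdouble).sub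
    Real.tendsto_harmonic_sub_log).add_const (Real.log 2)
  rw [sub_self, zero_add] at hlim
  refine hlim.congr' ?_
  filter_upwards [eventually_ne_atTop 0] with N hN
  simp only [Function.comp_apply, Nat.cast_mul, Nat.cast_ofNat]
  rw [Real.log_mul two_ne_zero (Nat.cast_ne_zero.mpr hN)]
  ring

/-- The odd harmonic number `1 + 1/3 + ⋯ + 1/(2n - 1)`, the inner partial sum of the double series;
`n` counts the terms. -/
noncomputable def oddHarmonic (n : ℕ) : ℝ := ∑ k ∈ range n, 1 / (2 * (k : ℝ) + 1)

lemma oddHarmonic_nonneg (n : ℕ) : 0 ≤ oddHarmonic n := sum_nonneg fun _ _ => by positivity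

lemma hasSum_oddHarmonic_mul_sub {c a : ℝ} (hc : 0 < c)
    (h : HasSum (fun n : ℕ => 1 / ((2 * (n : ℝ) + 1) * (2 * n + c))) a) :
    HasSum (fun n : ℕ => oddHarmonic (n + 1) * (1 / (2 * n + c) - 1 / (2 * n + 2 + c))) a := by
  have hparts := hasSum_sum_range_mul_sub_of_antitone (w := fun n => 1 / (2 * (n : ℝ) + 1))
    (fun n => by positivity) (antitone_one_div_mul_add zero_le_two hc)
    (tendsto_one_div_mul_add two_pos c) (by simpa only [one_div_mul_one_div] using h)
  refine hparts.congr_fun fun n => ?_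
  push_cast
  rw [oddHarmonic, mul_add_one]

lemma hasSum_one_div_odd_mul_odd_add (i : ℕ) :
    HasSum (fun j : ℕ => 1 / ((2 * (j : ℝ) + 1) * (2 * (i + 1 + j) + 1)))
      (oddHarmonic (i + 1) / (2 * i + 2)) := by
  have htelescope := hasSum_sub_add_of_antitone (antitone_one_div_mul_add zero_le_two one_pos)
    (tendsto_one_div_mul_add two_pos 1) (i + 1)
  refine (htelescope.div_const (2 * (i : ℝ) + 2)).congr_fun fun j => ?_
  push_cast
  field_simp
  ring

lemma hasSum_one_div_odd_triple {x : ℝ}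
    (hx : HasSum (fun n : ℕ => oddHarmonic (n + 1) / ((2 * n + 2) * (2 * n + 3))) x) :
    HasSum (fun p : ℕ × ℕ => 1 / ((2 * (p.1 : ℝ) + 1) * (2 * p.2 + 1) * (2 * (p.1 + p.2) + 1)))
      (Real.pi ^ 2 / 8 + x) := by
  let row : ℕ → ℝ
    | 0 => Real.pi ^ 2 / 8
    | i + 1 => oddHarmonic (i + 1) / ((2 * i + 2) * (2 * i + 3))
  have hrow : HasSum row (Real.pi ^ 2 / 8 + x) :=
    (hasSum_nat_add_iff' 1).mp (by simpa [row] using hx)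
  refine hasSum_prod_of_nonneg (fun p => by positivity) (fun i => ?_) hrow
  cases i with
  | zero =>
    refine hasSum_one_div_odd_sq.congr_fun fun j => ?_
    simp [sq]
  | succ i =>
    have hscaled := (hasSum_one_div_odd_mul_odd_add i).div_const (2 * (i : ℝ) + 3)
    rw [div_div] at hscaled
    refine hscaled.congr_fun fun j => ?_
    push_cast
    field_simp
    ring

lemma sum_antidiagonal_one_div_odd_triple (n : ℕ) :
    ∑ p ∈ antidiagonal n, 1 / ((2 * (p.1 : ℝ) + 1) * (2 * p.2 + 1) * (2 * (p.1 + p.2) + 1)) =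
      2 * (oddHarmonic (n + 1) / ((2 * n + 1) * (2 * n + 2))) := by
  calc _ = ∑ p ∈ antidiagonal n, 1 / ((2 * (p.1 : ℝ) + 1) * (2 * p.2 + 1)) / (2 * n + 1) :=
        sum_congr rfl fun p hp => by rw [← mem_antidiagonal.mp hp, Nat.cast_add, div_div]
    _ = _ := by
        rw [← sum_div, sum_antidiagonal_one_div_mul zero_le_two one_pos, ← oddHarmonic]
        field_simp

lemma hasSum_oddHarmonic_div_even_mul_odd :
    HasSum (fun n : ℕ => oddHarmonic (n + 1) / ((2 * n + 2) * (2 * n + 3))) (Real.pi ^ 2 / 24) := by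
  have hparts := hasSum_oddHarmonic_mul_sub one_pos
    (by simpa only [sq] using hasSum_one_div_odd_sq)
  have hsplit (n : ℕ) : oddHarmonic (n + 1) * (1 / (2 * n + 1) - 1 / (2 * n + 2 + 1)) =
      oddHarmonic (n + 1) / ((2 * n + 1) * (2 * n + 2)) +
        oddHarmonic (n + 1) / ((2 * n + 2) * (2 * n + 3)) := by
    field_simp
    ring
  simp_rw [hsplit] at hparts
  have hnonneg (n : ℕ) : 0 ≤ oddHarmonic (n + 1) := oddHarmonic_nonneg _
  obtain ⟨x, hx⟩ : Summable fun n : ℕ => oddHarmonic (n + 1) / ((2 * n + 2) * (2 * n + 3)) :=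
    hparts.summable.of_nonneg_of_le (fun n => by positivity [hnonneg n])
      fun n => le_add_of_nonneg_left (by positivity [hnonneg n])
  have hT := (hparts.sub hx).mul_left 2
  simp_rw [add_sub_cancel_right, ← sum_antidiagonal_one_div_odd_triple] at hT
  have hdouble := (hasSum_sum_antidiagonal_iff_of_nonneg fun p => by positivity).mp hT
  have hxval := hdouble.unique (hasSum_one_div_odd_triple hx)
  rwa [show Real.pi ^ 2 / 24 = x by linarith]

lemma hasSum_oddHarmonic_div_odd_mul_even :
    HasSum (fun n : ℕ => oddHarmonic (n + 1) / ((2 * n + 3) * (2 * n + 4)))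
      (Real.log 2 - Real.pi ^ 2 / 24) := by
  refine ((hasSum_oddHarmonic_mul_sub two_pos hasSum_one_div_odd_mul_even).sub
    hasSum_oddHarmonic_div_even_mul_odd).congr_fun fun n => ?_
  field_simp
  ring

lemma sum_antidiagonal_one_div_odd_mul (n : ℕ) :
    ∑ p ∈ antidiagonal n,
        1 / ((2 * (p.1 : ℝ) + 1) * (2 * (p.1 + p.2) + 3) * (2 * (p.1 + p.2) + 4)) =
      oddHarmonic (n + 1) / ((2 * n + 3) * (2 * n + 4)) := by
  rw [oddHarmonic,
    ← Nat.sum_antidiagonal_eq_sum_range_succ_mk (fun p => 1 / (2 * (p.1 : ℝ) + 1)) n, sum_div]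
  refine sum_congr rfl fun p hp => ?_
  rw [← mem_antidiagonal.mp hp, Nat.cast_add, div_div, mul_assoc]

theorem stmt8 :
    (∑' (i : ℕ) (j : ℕ),
        (1 : ℝ) / ((2 * (i : ℝ) + 1) * (2 * ((i : ℝ) + (j : ℝ)) + 3) * (2 * ((i : ℝ) + (j : ℝ)) + 4)))
      = Real.log 2 - (Real.pi ^ 2 / 6) / 4 := by
  have hdiag := hasSum_oddHarmonic_div_odd_mul_even
  simp_rw [← sum_antidiagonal_one_div_odd_mul] at hdiag
  have hdouble := (hasSum_sum_antidiagonal_iff_of_nonneg fun p => by positivity).mp hdiag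
  rw [← hdouble.summable.tsum_prod, hdouble.tsum_eq]
  ring
end
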